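/- arXiv:1906.12305 — 3 statements merged into one kernel-verified Lean document; each statement's English description precedes it below -/
import Mathlib

section
/- Let d ≥ 2 and let φ : ℝ → ℝ be a function such that φ(t)² = (t² + b t + c)/a for real constants a ≠ 0, b, c. Then every polynomial P of degree at most n in the d+1 variables (x, t) ∈ ℝ^d × ℝ can be written as P(x,t) = S(x) + t·T(x) + (φ(t)² − ‖x‖²)·R(x,t), where S is a polynomial in x of degree at most n, T is a polynomial in x of degree at most n−1, and R is a polynomial in (x,t) of degree at most n−2. -/
open MvPolynomial

/-!
On the surface `φ(t)² = ‖x‖²` the square `t²` can be eliminated, because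
`t² = a (φ(t)² - ‖x‖²) + a ‖x‖² - b t - c`. Multiplying by `A(x) t^k` rewrites `A(x) t^(k+2)` as
`(φ(t)² - ‖x‖²) · a A(x) t^k` plus terms of no larger total degree whose exponent of `t` is
at most `k + 1`. Iterating (`decomposable_mul_pow`) handles every product `A(x) t^k`, and `P` is a
sum of such products, one for each of its monomials.
-/

/-- The function `f(x, t)` has a decomposition `S(x) + t T(x) + (φ(t)² - ‖x‖²) R(x, t)` with the
degree bounds `n`, `n - 1`, `n - 2` (truncated at `0`). -/
def Decomposable {d : ℕ} (φ : ℝ → ℝ) (n : ℕ) (f : (Fin d → ℝ) → ℝ → ℝ) : Prop :=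
  ∃ (S T : MvPolynomial (Fin d) ℝ) (R : MvPolynomial (Fin (d + 1)) ℝ),
    S.totalDegree ≤ n ∧ T.totalDegree ≤ n - 1 ∧ R.totalDegree ≤ n - 2 ∧
    ∀ (x : Fin d → ℝ) (t : ℝ),
      f x t = MvPolynomial.eval x S + t * MvPolynomial.eval x T +
        (φ t ^ 2 - ∑ i, x i ^ 2) * MvPolynomial.eval (Fin.snoc x t) R

theorem Decomposable.add {d : ℕ} {φ : ℝ → ℝ} {n : ℕ} {f g : (Fin d → ℝ) → ℝ → ℝ}
    (hf : Decomposable φ n f) (hg : Decomposable φ n g) :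
    Decomposable φ n (fun x t => f x t + g x t) := by
  obtain ⟨S, T, R, hS, hT, hR, h⟩ := hf
  obtain ⟨S', T', R', hS', hT', hR', h'⟩ := hg
  refine ⟨S + S', T + T', R + R', (totalDegree_add _ _).trans (max_le hS hS'),
    (totalDegree_add _ _).trans (max_le hT hT'), (totalDegree_add _ _).trans (max_le hR hR'), ?_⟩
  intro x t
  simp only [h, h', map_add]
  ring

theorem Decomposable.sum {d : ℕ} {φ : ℝ → ℝ} {n : ℕ} {ι : Type*} (s : Finset ι)
    {f : ι → (Fin d → ℝ) → ℝ → ℝ} (h : ∀ i ∈ s, Decomposable φ n (f i)) :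
    Decomposable φ n (fun x t => ∑ i ∈ s, f i x t) := by
  classical
  induction s using Finset.induction_on with
  | empty => exact ⟨0, 0, 0, by simp, by simp, by simp, by simp⟩
  | insert i s hi ih =>
    simp only [Finset.sum_insert hi]
    exact (h i (by simp)).add (ih fun j hj => h j (by simp [hj]))

/-- A product `A(x) t^k` of total degree at most `n` is decomposable. The polynomial `A` varies in
the induction on `k`, since eliminating `t²` multiplies it by `‖x‖²`. -/
theorem decomposable_mul_pow {d : ℕ} {n : ℕ} {a b c : ℝ} (ha : a ≠ 0) {φ : ℝ → ℝ}
    (hφ : ∀ t : ℝ, φ t ^ 2 = (t ^ 2 + b * t + c) / a) (k : ℕ) :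
    ∀ A : MvPolynomial (Fin d) ℝ, A.totalDegree + k ≤ n →
      Decomposable φ n (fun x t => eval x A * t ^ k) := by
  induction k using Nat.strong_induction_on with
  | _ k ih =>
    intro A hA
    match k, ih, hA with
    | 0, _, hA => exact ⟨A, 0, 0, by simpa using hA, by simp, by simp, by simp⟩
    | 1, _, hA =>
      refine ⟨0, A, 0, by simp, by omega, by simp, fun x t => ?_⟩
      simp [mul_comm]
    | k + 2, ih, hA =>
      have hsmul (r : ℝ) : (C r * A).totalDegree ≤ A.totalDegree := by
        simpa using totalDegree_mul (C r) A
      have hsq : (∑ i : Fin d, (X i : MvPolynomial (Fin d) ℝ) ^ 2).totalDegree ≤ 2 :=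
        totalDegree_finsetSum_le fun i _ => by simp
      have hD : (C a * A * ∑ i : Fin d, X i ^ 2 - C c * A).totalDegree + k ≤ n := by
        have h1 := totalDegree_sub (C a * A * ∑ i : Fin d, X i ^ 2) (C c * A)
        have h2 := totalDegree_mul (C a * A) (∑ i : Fin d, X i ^ 2)
        have h3 := hsmul a
        have h4 := hsmul c
        omega
      have hE : (C (-b) * A).totalDegree + (k + 1) ≤ n := by
        have h1 := hsmul (-b)
        omega
      have hR : Decomposable φ n (fun x t =>
          (φ t ^ 2 - ∑ i : Fin d, x i ^ 2) * (a * (eval x A * t ^ k))) := by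
        refine ⟨0, 0, rename Fin.castSucc (C a * A) * X (Fin.last d) ^ k, by simp, by simp, ?_, ?_⟩
        · have h1 := totalDegree_mul (rename Fin.castSucc (C a * A))
            (X (Fin.last d) ^ k : MvPolynomial (Fin (d + 1)) ℝ)
          have h2 := totalDegree_rename_le (Fin.castSucc : Fin d → Fin (d + 1)) (C a * A)
          have h3 := hsmul a
          rw [totalDegree_X_pow] at h1
          omega
        · intro x t
          have hx : (Fin.snoc x t : Fin (d + 1) → ℝ) ∘ Fin.castSucc = x := by
            funext i
            simp
          simp only [map_mul, map_pow, eval_rename, eval_C, eval_X, hx, Fin.snoc_last, map_zero]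
          ring
      have key := ((ih k (by omega) _ hD).add (ih (k + 1) (by omega) _ hE)).add hR
      convert key using 3 with x t
      simp only [map_mul, map_sub, map_sum, map_pow, eval_C, eval_X]
      have ht : a * φ t ^ 2 = t ^ 2 + b * t + c := by
        rw [hφ]
        field_simp
      linear_combination (-(eval x A * t ^ k)) * ht

/-- Let `d ≥ 2` and `φ : ℝ → ℝ` with `φ(t)² = (t² + b t + c)/a`, `a ≠ 0`.
Every polynomial `P` of total degree at most `n` in the `d+1` variables `(x, t)` can be
written as `P(x,t) = S(x) + t·T(x) + (φ(t)² − ‖x‖²)·R(x,t)` with `deg S ≤ n`,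
`deg T ≤ n − 1`, `deg R ≤ n − 2`. -/
theorem quadratic_surface_polynomial_decomposition
    (d : ℕ) (hd : 2 ≤ d) (n : ℕ) (a b c : ℝ) (ha : a ≠ 0)
    (φ : ℝ → ℝ) (hφ : ∀ t : ℝ, φ t ^ 2 = (t ^ 2 + b * t + c) / a)
    (P : MvPolynomial (Fin (d + 1)) ℝ) (hP : P.totalDegree ≤ n) :
    ∃ (S T : MvPolynomial (Fin d) ℝ) (R : MvPolynomial (Fin (d + 1)) ℝ),
      S.totalDegree ≤ n ∧ T.totalDegree ≤ n - 1 ∧ R.totalDegree ≤ n - 2 ∧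
      ∀ (x : Fin d → ℝ) (t : ℝ),
        MvPolynomial.eval (Fin.snoc x t) P =
          MvPolynomial.eval x S + t * MvPolynomial.eval x T +
            (φ t ^ 2 - ∑ i, x i ^ 2) * MvPolynomial.eval (Fin.snoc x t) R := by
  change Decomposable φ n (fun x t => eval (Fin.snoc x t) P)
  have hsum : (fun (x : Fin d → ℝ) (t : ℝ) => eval (Fin.snoc x t : Fin (d + 1) → ℝ) P) =
      fun x t => ∑ m ∈ P.support,
        eval x (monomial (Finsupp.equivFunOnFinite.symm fun i : Fin d => m i.castSucc)
          (coeff m P)) * t ^ m (Fin.last d) := by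
    funext x t
    rw [eval_eq']
    refine Finset.sum_congr rfl fun m _ => ?_
    rw [Fin.prod_univ_castSucc, eval_monomial, Finsupp.prod_fintype _ _ (by simp)]
    simp [mul_assoc]
  rw [hsum]
  refine Decomposable.sum _ fun m hm => decomposable_mul_pow ha hφ _ _ ?_
  have h1 := totalDegree_monomial_le
    (Finsupp.equivFunOnFinite.symm fun i : Fin d => m i.castSucc) (coeff m P)
  have h2 := (le_totalDegree hm).trans hP
  rw [Finsupp.sum_fintype _ _ (by simp)] at h1 h2
  rw [Fin.sum_univ_castSucc] at h2
  simp only [Finsupp.equivFunOnFinite_symm_apply_apply, id] at h1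
  omega
end

section
/- Let d ≥ 2, let S ⊆ ℝ be a nonempty open interval, let φ : S → ℝ satisfy φ > 0 on S and φ(t)² = (t² + b t + c)/a for real constants a ≠ 0, b, c, and let w ≥ 0 be a weight on S that is positive almost everywhere, with all moments ∫_S |t|^k φ(t)^{d−1} w(t) dt finite and ∫_S φ(t)^{d−1} w(t) dt > 0. Define ⟨f,g⟩_w := c_w ∫_S φ(t)^{d−1} (∫_{S^{d−1}} f(φ(t)ξ, t) g(φ(t)ξ, t) dσ(ξ)) w(t) dt, where dσ is the surface measure on the unit sphere S^{d−1} ⊂ ℝ^d and c_w > 0 is normalized so that ⟨1,1⟩_w = 1. Let V_n(∂V^{d+1}) := {p ∈ Π_n(∂V^{d+1}) : ⟨p, q⟩_w = 0 for all q ∈ Π_{n−1}(∂V^{d+1})}. Then dim V_n(∂V^{d+1}) = C(n+d−1, d−1) + C(n+d−2, d−1), i.e., it equals dim P_n^d + dim P_{n−1}^d, where P_m^d is the space of homogeneous polynomials of degree m in d variables. -/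
/-!
Write `d = m + 1` and name the coordinates `(x₀, x₁, …, x_m, t)`. On the surface
`x₀² = (t² + bt + c)/a - x₁² - ⋯ - x_m²`, and the right-hand side `sqPoly` has degree at most two
and does not involve `x₀`. Hence every polynomial of degree `< N` agrees on the surface with some
`A + x₀ B`, where `A` and `B` are polynomials in `(x₁, …, x_m, t)` of degrees `< N` and `< N - 1`
(`surfLT_eq_map`). This form is unique (`normalForm_inj`): over an open set of points
`(x₁, …, x_m, t)` the surface contains the two points with opposite nonzero values of `x₀`, so
`A + x₀ B = 0` on the surface makes `A` and `B` vanish on an open set. Eliminating `x₀` rather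
than `t` avoids any discussion of whether `a‖x‖² - t² - bt - c` is irreducible. Counting monomials
gives `dim Π_{N-1}(∂V) = C(N+m, m+1) + C(N-1+m, m+1)` (`finrank_surfLT`).

The form `⟨·,·⟩_w` is an inner product on restrictions of polynomials. Bilinearity needs the
existence of the integrals (`integrableOn_sphInt`), which follows from the moment condition, since
integrating a monomial over the sphere leaves a multiple of `φ^k t^j`, and `φ²` is a polynomial in
`t`. If `⟨p, p⟩_w = 0`, then `p(φ(t)ξ, t) = 0` for almost every `t` and all `ξ`, hence everywhere
on the surface by continuity (`restrictLin_eq_zero_of_integral`). Therefore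
`dim V_n = dim Π_n - dim Π_{n-1}` (`finrank_orthogonal_add`), and Pascal's rule evaluates the
difference.
-/

open MeasureTheory MvPolynomial

noncomputable section

/-- The quadratic surface of revolution `∂V^{d+1} = {(x,t) : ‖x‖ = φ(t), t ∈ S}`. -/
def quadSurface (d : ℕ) (Sset : Set ℝ) (φ : ℝ → ℝ) :
    Set (EuclideanSpace ℝ (Fin d) × ℝ) :=
  {z | z.2 ∈ Sset ∧ ‖z.1‖ = φ z.2}

/-- Restriction of polynomials in `d+1` variables to a subset of `ℝ^d × ℝ`. -/
def restrictLin (d : ℕ) (A : Set (EuclideanSpace ℝ (Fin d) × ℝ)) :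
    MvPolynomial (Fin (d + 1)) ℝ →ₗ[ℝ] (A → ℝ) where
  toFun p := fun z =>
    MvPolynomial.eval
      (Fin.snoc (z : EuclideanSpace ℝ (Fin d) × ℝ).1
        (z : EuclideanSpace ℝ (Fin d) × ℝ).2) p
  map_add' p q := by funext z; simp
  map_smul' r p := by funext z; simp [MvPolynomial.smul_eval]

open scoped Classical in
/-- Extension of a function on a subset by `0`. -/
def ext0 {X : Type*} (A : Set X) (f : A → ℝ) : X → ℝ :=
  fun z => if h : z ∈ A then f ⟨z, h⟩ else 0

/-- The surface measure `dσ` on the unit sphere `S^{d−1} ⊆ ℝ^d`. -/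
def sphMeas (d : ℕ) : Measure (Metric.sphere (0 : EuclideanSpace ℝ (Fin d)) 1) :=
  (volume : Measure (EuclideanSpace ℝ (Fin d))).toSphere

/-- The bilinear form `⟨f,g⟩_w = c_w ∫_S φ(t)^{d−1} (∫_{S^{d−1}} f(φ(t)ξ,t) g(φ(t)ξ,t) dσ(ξ)) w(t) dt`
on functions defined on the quadratic surface of revolution. -/
def surfInner (d : ℕ) (Sset : Set ℝ) (φ w : ℝ → ℝ) (cw : ℝ)
    (f g : quadSurface d Sset φ → ℝ) : ℝ :=
  cw * ∫ t in Sset, (φ t) ^ (d - 1) *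
    (∫ ξ : Metric.sphere (0 : EuclideanSpace ℝ (Fin d)) 1,
      ext0 (quadSurface d Sset φ) f (φ t • (ξ : EuclideanSpace ℝ (Fin d)), t) *
      ext0 (quadSurface d Sset φ) g (φ t • (ξ : EuclideanSpace ℝ (Fin d)), t)
      ∂(sphMeas d)) * w t

/-! ### Polynomials of bounded degree -/

/-- Polynomials in `k` variables all of whose monomials have degree `< N`. The strict bound makes
`polyLT k 0` the zero space, so that `Π_{n-1}` makes sense for `n = 0` as well. -/
def polyLT (k N : ℕ) : Submodule ℝ (MvPolynomial (Fin k) ℝ) :=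
  restrictSupport ℝ {s | s.degree < N}

lemma mem_polyLT_iff {k N : ℕ} {p : MvPolynomial (Fin k) ℝ} :
    p ∈ polyLT k N ↔ p = 0 ∨ p.totalDegree < N := by
  rw [polyLT, mem_restrictSupport_iff]
  constructor
  · intro h
    by_cases hp : p = 0
    · exact Or.inl hp
    right
    obtain ⟨s, hs⟩ := MvPolynomial.support_nonempty.2 hp
    have h0 : 0 < N := lt_of_le_of_lt (Nat.zero_le _) (h hs)
    rw [totalDegree, Finset.sup_lt_iff (by simpa using h0)]
    intro s hs
    exact h hs
  · rintro (rfl | h)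
    · simp
    · intro s hs
      exact lt_of_le_of_lt (le_totalDegree (p := p) hs) h

lemma restrictTotalDegree_eq_polyLT (k n : ℕ) :
    restrictTotalDegree (Fin k) ℝ n = polyLT k (n + 1) := by
  ext p
  rw [mem_restrictTotalDegree, mem_polyLT_iff]
  constructor
  · intro h; right; omega
  · rintro (rfl | h)
    · simp
    · omega

lemma setOf_degree_lt_eq (k N : ℕ) :
    {s : Fin k →₀ ℕ | s.degree < N} =
      ((Finset.range N).biUnion fun j => Finset.univ.finsuppAntidiag j : Finset (Fin k →₀ ℕ)) := by
  ext s
  simp [Finset.mem_finsuppAntidiag, Finsupp.degree_eq_sum]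

/-- The hockey-stick identity, with the summands as they come from counting monomials of degree
`j` in `m + 1` variables. -/
lemma sum_choose_eq (m N : ℕ) :
    ∑ j ∈ Finset.range N, (m + 1 + j - 1).choose j = (N + m).choose (m + 1) := by
  induction N with
  | zero => simp
  | succ N ih =>
    rw [Finset.sum_range_succ, ih, show m + 1 + N - 1 = N + m by omega,
      show N + 1 + m = (N + m) + 1 by omega, Nat.choose_succ_succ, add_comm,
      Nat.choose_symm_add]

instance (k N : ℕ) : Module.Finite ℝ (polyLT k N) := by
  have : Finite {s : Fin k →₀ ℕ | s.degree < N} := by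
    rw [setOf_degree_lt_eq]; exact Finset.finite_toSet _
  exact Module.Finite.of_basis (basisRestrictSupport ℝ {s : Fin k →₀ ℕ | s.degree < N})

lemma finrank_polyLT (m N : ℕ) :
    Module.finrank ℝ (polyLT (m + 1) N) = (N + m).choose (m + 1) := by
  rw [polyLT, Module.finrank_eq_nat_card_basis (basisRestrictSupport ℝ _), setOf_degree_lt_eq]
  rw [Nat.card_coe_set_eq, Set.ncard_coe_finset, Finset.card_biUnion, ← sum_choose_eq]
  · refine Finset.sum_congr rfl fun j _ => ?_
    rw [Finset.card_finsuppAntidiag_nat_eq_choose, Finset.card_univ, Fintype.card_fin]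
  · intro i _ j _ hij
    rw [Function.onFun, Finset.disjoint_left]
    intro s hs ht
    rw [Finset.mem_finsuppAntidiag] at hs ht
    exact hij (hs.1.symm.trans ht.1)

/-! ### The normal form `A + x₀ B` on the surface -/

/-- `(A, B) ↦ A(x₁, …, x_m, t) + x₀ B(x₁, …, x_m, t)`. -/
def normalForm (m : ℕ) :
    (MvPolynomial (Fin (m + 1)) ℝ × MvPolynomial (Fin (m + 1)) ℝ) →ₗ[ℝ]
      MvPolynomial (Fin (m + 1 + 1)) ℝ :=
  (rename Fin.succ).toLinearMap.coprod
    (LinearMap.mulLeft ℝ (X 0) ∘ₗ (rename Fin.succ).toLinearMap)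

lemma normalForm_apply (m : ℕ) (A B : MvPolynomial (Fin (m + 1)) ℝ) :
    normalForm m (A, B) = rename Fin.succ A + X 0 * rename Fin.succ B := rfl

lemma normalForm_mem (m N : ℕ) {A B : MvPolynomial (Fin (m + 1)) ℝ}
    (hA : A ∈ polyLT (m + 1) N) (hB : B ∈ polyLT (m + 1) (N - 1)) :
    normalForm m (A, B) ∈ polyLT (m + 1 + 1) N := by
  rw [normalForm_apply]
  refine add_mem ?_ ?_
  · rw [mem_polyLT_iff] at hA ⊢
    rcases hA with rfl | hA
    · simp
    · exact Or.inr ((totalDegree_rename_le _ _).trans_lt hA)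
  · rw [mem_polyLT_iff] at hB ⊢
    rcases hB with rfl | hB
    · simp
    · right
      have h1 := totalDegree_mul (X 0 : MvPolynomial (Fin (m + 1 + 1)) ℝ) (rename Fin.succ B)
      have h2 := totalDegree_rename_le (Fin.succ : Fin (m + 1) → Fin (m + 1 + 1)) B
      rw [totalDegree_X] at h1
      omega

/-- The polynomial `(t² + bt + c)/a - x₁² - ⋯ - x_m²`, which agrees with `x₀²` on the surface. -/
def sqPoly (m : ℕ) (a b c : ℝ) : MvPolynomial (Fin (m + 1)) ℝ :=
  C a⁻¹ * (X (Fin.last m) ^ 2 + C b * X (Fin.last m) + C c) - ∑ i : Fin m, X i.castSucc ^ 2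

lemma totalDegree_sqPoly_le (m : ℕ) (a b c : ℝ) : (sqPoly m a b c).totalDegree ≤ 2 := by
  rw [← mem_restrictTotalDegree]
  have hC : ∀ (r : ℝ) (p : MvPolynomial (Fin (m + 1)) ℝ),
      p ∈ restrictTotalDegree (Fin (m + 1)) ℝ 2 →
      C r * p ∈ restrictTotalDegree (Fin (m + 1)) ℝ 2 := by
    intro r p hp
    rw [← smul_eq_C_mul]
    exact Submodule.smul_mem _ _ hp
  refine sub_mem (hC _ _ (add_mem (add_mem ?_ (hC _ _ ?_)) ?_)) (sum_mem fun i _ => ?_) <;>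
    rw [mem_restrictTotalDegree] <;> simp [totalDegree_X_pow]

lemma eval_sqPoly (m : ℕ) (a b c : ℝ) (y : Fin (m + 1) → ℝ) :
    eval y (sqPoly m a b c) = (y (Fin.last m) ^ 2 + b * y (Fin.last m) + c) / a -
      ∑ i : Fin m, y i.castSucc ^ 2 := by
  simp [sqPoly, div_eq_inv_mul]

/-- The point of `ℝ^{m+1} × ℝ` with Cartesian coordinates `(x₀, y₀, …, y_m)`; the last one,
`y_m`, is the coordinate `t`. -/
def mkPt (m : ℕ) (x0 : ℝ) (y : Fin (m + 1) → ℝ) : EuclideanSpace ℝ (Fin (m + 1)) × ℝ :=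
  (WithLp.toLp 2 (Fin.cons x0 fun i : Fin m => y i.castSucc), y (Fin.last m))

lemma snoc_mkPt (m : ℕ) (x0 : ℝ) (y : Fin (m + 1) → ℝ) :
    (Fin.snoc (α := fun _ => ℝ) (mkPt m x0 y).1 (mkPt m x0 y).2 : Fin (m + 1 + 1) → ℝ) =
      Fin.cons x0 y := by
  funext i
  refine Fin.cases ?_ (fun i => ?_) i
  · have : (0 : Fin (m + 1 + 1)) = Fin.castSucc 0 := rfl
    rw [this, Fin.snoc_castSucc]
    simp [mkPt]
  · refine Fin.lastCases ?_ (fun i => ?_) i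
    · rw [Fin.succ_last, Fin.snoc_last, ← Fin.succ_last, Fin.cons_succ]
      rfl
    · rw [← Fin.castSucc_succ, Fin.snoc_castSucc, Fin.castSucc_succ, Fin.cons_succ]
      simp [mkPt]

lemma exists_eq_mkPt (m : ℕ) (z : EuclideanSpace ℝ (Fin (m + 1)) × ℝ) :
    ∃ x0 y, z = mkPt m x0 y := by
  refine ⟨z.1 0, Fin.snoc (α := fun _ => ℝ) (fun i => z.1 i.succ) z.2, ?_⟩
  ext i
  · refine Fin.cases ?_ (fun i => ?_) i <;> simp [mkPt]
  · simp [mkPt]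

lemma eval_normalForm_cons (m : ℕ) (A B : MvPolynomial (Fin (m + 1)) ℝ) (x0 : ℝ)
    (y : Fin (m + 1) → ℝ) :
    eval (Fin.cons x0 y : Fin (m + 1 + 1) → ℝ) (normalForm m (A, B)) =
      eval y A + x0 * eval y B := by
  have : (Fin.cons x0 y : Fin (m + 1 + 1) → ℝ) ∘ Fin.succ = y := by
    funext i; simp
  simp [normalForm_apply, eval_rename, this]

/-- Membership of a point in the surface reads `x₀² = (t² + bt + c)/a - x₁² - ⋯ - x_m²`. -/
lemma mkPt_mem_iff (m : ℕ) {a b c : ℝ} {S : Set ℝ} {φ : ℝ → ℝ} (hφpos : ∀ t ∈ S, 0 < φ t)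
    (hφ : ∀ t ∈ S, φ t ^ 2 = (t ^ 2 + b * t + c) / a) (x0 : ℝ) (y : Fin (m + 1) → ℝ) :
    mkPt m x0 y ∈ quadSurface (m + 1) S φ ↔
      y (Fin.last m) ∈ S ∧ x0 ^ 2 = eval y (sqPoly m a b c) := by
  have h1 : (mkPt m x0 y).2 = y (Fin.last m) := rfl
  have h2 : ‖(mkPt m x0 y).1‖ ^ 2 = x0 ^ 2 + ∑ i : Fin m, y i.castSucc ^ 2 := by
    rw [EuclideanSpace.real_norm_sq_eq, Fin.sum_univ_succ]
    simp [mkPt]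
  rw [quadSurface, Set.mem_ofPred_eq, h1, eval_sqPoly]
  refine and_congr_right fun ht => ?_
  rw [← pow_left_inj₀ (norm_nonneg _) (hφpos _ ht).le two_ne_zero, h2, hφ _ ht,
    eq_sub_iff_add_eq]

/-- The restriction of `A + x₀ B` determines `A` and `B`: over a box of points `(x₁, …, x_m, t)`
both values `± x₀ ≠ 0` occur on the surface. -/
lemma normalForm_inj (m : ℕ) {a b c : ℝ} {S : Set ℝ} {φ : ℝ → ℝ} (hS : IsOpen S)
    (hne : S.Nonempty) (hφpos : ∀ t ∈ S, 0 < φ t)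
    (hφ : ∀ t ∈ S, φ t ^ 2 = (t ^ 2 + b * t + c) / a)
    (A B : MvPolynomial (Fin (m + 1)) ℝ)
    (h : restrictLin (m + 1) (quadSurface (m + 1) S φ) (normalForm m (A, B)) = 0) :
    A = 0 ∧ B = 0 := by
  obtain ⟨t0, ht0⟩ := hne
  -- the base points `(x₁, …, x_m, t)` over which `x₀ = ± √(sqPoly)` takes two distinct real values
  set O : Set (Fin (m + 1) → ℝ) :=
    {y | y (Fin.last m) ∈ S} ∩ {y | 0 < eval y (sqPoly m a b c)} with hO
  have hOopen : IsOpen O :=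
    (hS.preimage (continuous_apply _)).inter
      (isOpen_lt continuous_const (MvPolynomial.continuous_eval _))
  set y0 : Fin (m + 1) → ℝ := Fin.snoc (α := fun _ => ℝ) (fun _ => 0) t0 with hy0
  have hy0O : y0 ∈ O := by
    refine ⟨by simpa [hy0] using ht0, ?_⟩
    simp only [Set.mem_ofPred_eq, eval_sqPoly]
    have : 0 < φ t0 ^ 2 := pow_pos (hφpos _ ht0) 2
    rw [hφ _ ht0] at this
    simpa [hy0] using this
  obtain ⟨ε, hε, hball⟩ := Metric.isOpen_iff.1 hOopen y0 hy0O
  have key : ∀ y ∈ O, eval y A = 0 ∧ eval y B = 0 := by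
    intro y hy
    have hval : ∀ x0, x0 ^ 2 = eval y (sqPoly m a b c) → eval y A + x0 * eval y B = 0 := by
      intro x0 hx0
      have hmem := (mkPt_mem_iff m hφpos hφ x0 y).2 ⟨hy.1, hx0⟩
      have := congrFun h ⟨_, hmem⟩
      change eval (Fin.snoc (α := fun _ => ℝ) (mkPt m x0 y).1 (mkPt m x0 y).2) _ = 0 at this
      rwa [snoc_mkPt, eval_normalForm_cons] at this
    have hpos : 0 < eval y (sqPoly m a b c) := hy.2
    have hs := Real.sq_sqrt hpos.le
    have e1 := hval _ hs
    have e2 := hval (-√(eval y (sqPoly m a b c))) (by rw [neg_sq, hs])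
    have hA : eval y A = 0 := by linarith
    refine ⟨hA, ?_⟩
    rw [hA, zero_add] at e1
    exact (mul_eq_zero.1 e1).resolve_left (Real.sqrt_pos.2 hpos).ne'
  have hbox : ∀ y ∈ Set.pi Set.univ fun i => Metric.ball (y0 i) ε, y ∈ O := by
    intro y hy
    rw [← ball_pi _ hε] at hy
    exact hball hy
  have hinf : ∀ i, (Metric.ball (y0 i) ε).Infinite := by
    intro i
    rw [Real.ball_eq_Ioo]
    exact Set.Ioo_infinite (by linarith)
  exact ⟨MvPolynomial.funext_set _ hinf fun y hy => by simpa using (key y (hbox y hy)).1,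
    MvPolynomial.funext_set _ hinf fun y hy => by simpa using (key y (hbox y hy)).2⟩

/-- The space of restrictions to the surface of polynomials of degree `< N`. -/
def surfLT (m : ℕ) (S : Set ℝ) (φ : ℝ → ℝ) (N : ℕ) :
    Submodule ℝ (quadSurface (m + 1) S φ → ℝ) :=
  (polyLT (m + 1 + 1) N).map (restrictLin (m + 1) (quadSurface (m + 1) S φ))

/-- Replacing `x₀²` by `sqPoly` brings each polynomial of degree `< N` to the form `A + x₀ B`
on the surface, without raising the degree. -/
lemma surfLT_eq_map (m : ℕ) {a b c : ℝ} {S : Set ℝ} {φ : ℝ → ℝ}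
    (hφpos : ∀ t ∈ S, 0 < φ t)
    (hφ : ∀ t ∈ S, φ t ^ 2 = (t ^ 2 + b * t + c) / a) (N : ℕ) :
    surfLT m S φ N = ((polyLT (m + 1) N).prod (polyLT (m + 1) (N - 1))).map
      (restrictLin (m + 1) (quadSurface (m + 1) S φ) ∘ₗ normalForm m) := by
  rw [Submodule.map_comp]
  apply le_antisymm
  · rw [surfLT, polyLT, restrictSupport_eq_span, Submodule.map_span, Submodule.span_le]
    rintro _ ⟨_, ⟨s, hs, rfl⟩, rfl⟩
    have hmon : ∀ y : Fin (m + 1) → ℝ, ∀ x0 : ℝ,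
        eval (Fin.cons x0 y : Fin (m + 1 + 1) → ℝ) (monomial s 1) =
          x0 ^ s 0 * eval y (monomial s.tail 1) := by
      intro y x0
      rw [eval_monomial, eval_monomial, Finsupp.prod_fintype _ _ (by simp),
        Finsupp.prod_fintype _ _ (by simp), Fin.prod_univ_succ]
      simp [Finsupp.tail_apply]
    have hdeg : s 0 + s.tail.degree < N := by
      have : s.degree < N := hs
      rw [Finsupp.degree_eq_sum, Fin.sum_univ_succ] at this
      simpa [Finsupp.degree_eq_sum, Finsupp.tail_apply] using this
    have hD : ∀ j : ℕ, (sqPoly m a b c ^ j * monomial s.tail (1 : ℝ)).totalDegree ≤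
        2 * j + s.tail.degree := by
      intro j
      refine (totalDegree_mul _ _).trans (add_le_add ?_ ?_)
      · refine (totalDegree_pow _ _).trans ?_
        rw [mul_comm]
        exact Nat.mul_le_mul_right _ (totalDegree_sqPoly_le m a b c)
      · rw [totalDegree_monomial _ one_ne_zero]
        rfl
    obtain ⟨j, hj | hj⟩ := Nat.even_or_odd' (s 0)
    · refine ⟨_, ⟨(sqPoly m a b c ^ j * monomial s.tail 1, 0), ⟨?_, zero_mem _⟩, rfl⟩, ?_⟩
      · exact mem_polyLT_iff.2 (Or.inr ((hD j).trans_lt (by omega)))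
      · funext ⟨z, hz⟩
        obtain ⟨x0, y, rfl⟩ := exists_eq_mkPt m z
        have hx := ((mkPt_mem_iff m hφpos hφ x0 y).1 hz).2
        change eval (Fin.snoc (α := fun _ => ℝ) (mkPt m x0 y).1 (mkPt m x0 y).2) _ =
          eval (Fin.snoc (α := fun _ => ℝ) (mkPt m x0 y).1 (mkPt m x0 y).2) _
        rw [snoc_mkPt, eval_normalForm_cons, hmon, hj, pow_mul, hx]
        simp
    · refine ⟨_, ⟨(0, sqPoly m a b c ^ j * monomial s.tail 1), ⟨zero_mem _, ?_⟩, rfl⟩, ?_⟩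
      · exact mem_polyLT_iff.2 (Or.inr ((hD j).trans_lt (by omega)))
      · funext ⟨z, hz⟩
        obtain ⟨x0, y, rfl⟩ := exists_eq_mkPt m z
        have hx := ((mkPt_mem_iff m hφpos hφ x0 y).1 hz).2
        change eval (Fin.snoc (α := fun _ => ℝ) (mkPt m x0 y).1 (mkPt m x0 y).2) _ =
          eval (Fin.snoc (α := fun _ => ℝ) (mkPt m x0 y).1 (mkPt m x0 y).2) _
        rw [snoc_mkPt, eval_normalForm_cons, hmon, hj, pow_succ, pow_mul, hx]
        simp only [map_zero, map_mul, map_pow]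
        ring
  · refine Submodule.map_mono ?_
    rintro _ ⟨⟨A, B⟩, ⟨hA, hB⟩, rfl⟩
    exact normalForm_mem m N hA hB

lemma finrank_surfLT (m : ℕ) {a b c : ℝ} {S : Set ℝ} {φ : ℝ → ℝ} (hS : IsOpen S)
    (hne : S.Nonempty) (hφpos : ∀ t ∈ S, 0 < φ t)
    (hφ : ∀ t ∈ S, φ t ^ 2 = (t ^ 2 + b * t + c) / a) (N : ℕ) :
    Module.finrank ℝ (surfLT m S φ N) =
      (N + m).choose (m + 1) + (N - 1 + m).choose (m + 1) := by
  set F := (restrictLin (m + 1) (quadSurface (m + 1) S φ) ∘ₗ normalForm m) ∘ₗ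
    (polyLT (m + 1) N).subtype.prodMap (polyLT (m + 1) (N - 1)).subtype with hF
  have hrange : surfLT m S φ N = LinearMap.range F := by
    rw [surfLT_eq_map m hφpos hφ, hF, LinearMap.range_comp, LinearMap.range_prodMap,
      Submodule.range_subtype, Submodule.range_subtype]
  have hinj : Function.Injective F := by
    rw [injective_iff_map_eq_zero]
    rintro ⟨A, B⟩ h
    obtain ⟨hA, hB⟩ := normalForm_inj m hS hne hφpos hφ A.1 B.1 h
    exact Prod.ext (Subtype.ext hA) (Subtype.ext hB)
  rw [hrange, LinearMap.finrank_range_of_inj hinj, Module.finrank_prod, finrank_polyLT,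
    finrank_polyLT]

instance (m : ℕ) (S : Set ℝ) (φ : ℝ → ℝ) (N : ℕ) : Module.Finite ℝ (surfLT m S φ N) := by
  unfold surfLT; infer_instance

/-! ### Integrals over the surface -/

/-- The value of a polynomial at a point of `ℝ^d × ℝ`. -/
def evalAt (d : ℕ) (z : EuclideanSpace ℝ (Fin d) × ℝ) (p : MvPolynomial (Fin (d + 1)) ℝ) : ℝ :=
  eval (Fin.snoc z.1 z.2) p

lemma restrictLin_apply (d : ℕ) (A : Set (EuclideanSpace ℝ (Fin d) × ℝ))
    (p : MvPolynomial (Fin (d + 1)) ℝ) (z : A) :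
    restrictLin d A p z = evalAt d z p := rfl

lemma evalAt_mul (d : ℕ) (z : EuclideanSpace ℝ (Fin d) × ℝ)
    (p q : MvPolynomial (Fin (d + 1)) ℝ) : evalAt d z (p * q) = evalAt d z p * evalAt d z q :=
  map_mul _ _ _

lemma evalAt_add (d : ℕ) (z : EuclideanSpace ℝ (Fin d) × ℝ)
    (p q : MvPolynomial (Fin (d + 1)) ℝ) : evalAt d z (p + q) = evalAt d z p + evalAt d z q :=
  map_add _ _ _

lemma evalAt_smul (d : ℕ) (z : EuclideanSpace ℝ (Fin d) × ℝ) (k : ℝ)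
    (p : MvPolynomial (Fin (d + 1)) ℝ) : evalAt d z (k • p) = k * evalAt d z p :=
  smul_eval _ _ _

lemma evalAt_monomial (d : ℕ) (z : EuclideanSpace ℝ (Fin d) × ℝ) (u : Fin (d + 1) →₀ ℕ) (k : ℝ) :
    evalAt d z (monomial u k) =
      k * ((∏ i : Fin d, z.1 i ^ u i.castSucc) * z.2 ^ u (Fin.last d)) := by
  rw [evalAt, eval_monomial, Finsupp.prod_fintype _ _ (by simp), Fin.prod_univ_castSucc]
  simp only [Fin.snoc_castSucc, Fin.snoc_last]

lemma continuous_evalAt (d : ℕ) (p : MvPolynomial (Fin (d + 1)) ℝ) :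
    Continuous fun z => evalAt d z p := by
  refine (MvPolynomial.continuous_eval p).comp ?_
  exact Continuous.finSnoc (A := fun _ => ℝ) (by fun_prop) continuous_snd

/-- The integral of `p(rξ, t)` over `ξ` in the unit sphere. -/
def sphInt (d : ℕ) (r t : ℝ) (p : MvPolynomial (Fin (d + 1)) ℝ) : ℝ :=
  ∫ ξ : Metric.sphere (0 : EuclideanSpace ℝ (Fin d)) 1,
    evalAt d (r • (ξ : EuclideanSpace ℝ (Fin d)), t) p
      ∂(sphMeas d)

instance (d : ℕ) : IsFiniteMeasure (sphMeas d) := by unfold sphMeas; infer_instance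

instance (d : ℕ) : (sphMeas d).IsOpenPosMeasure := by unfold sphMeas; infer_instance

lemma continuous_sph (d : ℕ) (r t : ℝ) (p : MvPolynomial (Fin (d + 1)) ℝ) :
    Continuous fun ξ : Metric.sphere (0 : EuclideanSpace ℝ (Fin d)) 1 =>
      evalAt d (r • (ξ : EuclideanSpace ℝ (Fin d)), t) p :=
  (continuous_evalAt d p).comp
    ((continuous_subtype_val.const_smul r).prodMk continuous_const)

lemma integrable_sph (d : ℕ) (r t : ℝ) (p : MvPolynomial (Fin (d + 1)) ℝ) :
    Integrable (fun ξ : Metric.sphere (0 : EuclideanSpace ℝ (Fin d)) 1 =>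
      evalAt d (r • (ξ : EuclideanSpace ℝ (Fin d)), t) p) (sphMeas d) :=
  (continuous_sph d r t p).integrable_of_hasCompactSupport (HasCompactSupport.of_compactSpace _)

lemma sphInt_add (d : ℕ) (r t : ℝ) (p q : MvPolynomial (Fin (d + 1)) ℝ) :
    sphInt d r t (p + q) = sphInt d r t p + sphInt d r t q := by
  simp only [sphInt, evalAt_add]
  exact integral_add (integrable_sph d r t p) (integrable_sph d r t q)

lemma sphInt_smul (d : ℕ) (r t : ℝ) (k : ℝ) (p : MvPolynomial (Fin (d + 1)) ℝ) :
    sphInt d r t (k • p) = k * sphInt d r t p := by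
  simp only [sphInt, evalAt_smul]
  exact integral_const_mul _ _

/-- A monomial is homogeneous in `x`, so its spherical integral is a multiple of `r^k t^j`. -/
lemma sphInt_monomial (d : ℕ) (u : Fin (d + 1) →₀ ℕ) (k : ℝ) :
    ∃ C : ℝ, ∀ r t, sphInt d r t (monomial u k) =
      C * (r ^ (∑ i : Fin d, u i.castSucc) * t ^ u (Fin.last d)) := by
  refine ⟨∫ ξ : Metric.sphere (0 : EuclideanSpace ℝ (Fin d)) 1,
    k * ∏ i : Fin d, ((ξ : EuclideanSpace ℝ (Fin d)) i) ^ u i.castSucc ∂(sphMeas d),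
    fun r t => ?_⟩
  rw [← integral_mul_const, sphInt]
  congr 1
  funext ξ
  simp only [evalAt_monomial, PiLp.smul_apply, smul_eq_mul, mul_pow,
    Finset.prod_mul_distrib, Finset.prod_pow_eq_pow_sum]
  ring

/-- The radius is the square root of a polynomial, hence continuous. -/
lemma continuousOn_phi {a b c : ℝ} {S : Set ℝ} {φ : ℝ → ℝ} (hφpos : ∀ t ∈ S, 0 < φ t)
    (hφ : ∀ t ∈ S, φ t ^ 2 = (t ^ 2 + b * t + c) / a) : ContinuousOn φ S := by
  have : ContinuousOn (fun t => √((t ^ 2 + b * t + c) / a)) S := by fun_prop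
  refine this.congr fun t ht => ?_
  dsimp only
  rw [← hφ t ht, Real.sqrt_sq (hφpos t ht).le]

lemma integrableOn_poly {d : ℕ} {S : Set ℝ} {φ w : ℝ → ℝ}
    (hmom : ∀ k : ℕ, IntegrableOn (fun t => |t| ^ k * (φ t) ^ (d - 1) * w t) S)
    (P : Polynomial ℝ) :
    IntegrableOn (fun t => P.eval t * ((φ t) ^ (d - 1) * w t)) S := by
  have hmeas : AEStronglyMeasurable (fun t => (φ t) ^ (d - 1) * w t) (volume.restrict S) := by
    simpa using (hmom 0).aestronglyMeasurable
  induction P using Polynomial.induction_on' with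
  | add p q hp hq =>
    simp only [Polynomial.eval_add, add_mul]
    exact hp.add hq
  | monomial n k =>
    refine ((hmom n).const_mul k).mono ?_ (Filter.Eventually.of_forall fun t => ?_)
    · exact ((Polynomial.monomial n k).continuous.aestronglyMeasurable).mul hmeas
    · simp [mul_assoc]

/-- Odd powers of `φ` are not polynomials in `t`, but `|φ|^k ≤ 1 + φ^{2k}`, so the moments of
`φ^k t^j` exist. -/
lemma integrableOn_pow {d : ℕ} {a b c : ℝ} {S : Set ℝ} (hS : IsOpen S) {φ w : ℝ → ℝ}
    (hφpos : ∀ t ∈ S, 0 < φ t)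
    (hφ : ∀ t ∈ S, φ t ^ 2 = (t ^ 2 + b * t + c) / a)
    (hmom : ∀ k : ℕ, IntegrableOn (fun t => |t| ^ k * (φ t) ^ (d - 1) * w t) S) (k j : ℕ) :
    IntegrableOn (fun t => (φ t ^ k * t ^ j) * ((φ t) ^ (d - 1) * w t)) S := by
  have hmeas : AEStronglyMeasurable (fun t => (φ t) ^ (d - 1) * w t) (volume.restrict S) := by
    simpa using (hmom 0).aestronglyMeasurable
  have hc := continuousOn_phi hφpos hφ
  have hcont : ContinuousOn (fun t => φ t ^ k * t ^ j) S := by fun_prop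
  refine Integrable.mono (integrableOn_poly hmom ((1 + (Polynomial.C a⁻¹ * (Polynomial.X ^ 2 +
    Polynomial.C b * Polynomial.X + Polynomial.C c)) ^ k) *
      (1 + Polynomial.X ^ (2 * j))))
    ((hcont.aestronglyMeasurable hS.measurableSet).mul hmeas)
    (ae_restrict_of_forall_mem hS.measurableSet fun t ht => ?_)
  have hq : a⁻¹ * (t ^ 2 + b * t + c) = φ t ^ 2 := by rw [hφ t ht, div_eq_inv_mul]
  have hle : ∀ x : ℝ, |x| ≤ 1 + x ^ 2 := fun x => by
    nlinarith [sq_nonneg (|x| - 1), sq_abs x, abs_nonneg x]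
  have h1 : |φ t ^ k| ≤ 1 + (φ t ^ 2) ^ k := by
    rw [← pow_mul, mul_comm, pow_mul]; exact hle _
  have h2 : |t ^ j| ≤ 1 + t ^ (2 * j) := by
    rw [mul_comm, pow_mul]; exact hle _
  rw [norm_mul, norm_mul (Polynomial.eval _ _)]
  refine mul_le_mul_of_nonneg_right ?_ (norm_nonneg _)
  simp only [Polynomial.eval_mul, Polynomial.eval_add, Polynomial.eval_pow, Polynomial.eval_C,
    Polynomial.eval_X, Polynomial.eval_one]
  rw [hq, Real.norm_eq_abs, Real.norm_eq_abs, abs_mul]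
  refine (mul_le_mul h1 h2 (abs_nonneg _) (by positivity)).trans (le_abs_self _)

lemma integrableOn_sphInt {d : ℕ} {a b c : ℝ} {S : Set ℝ} (hS : IsOpen S) {φ w : ℝ → ℝ}
    (hφpos : ∀ t ∈ S, 0 < φ t)
    (hφ : ∀ t ∈ S, φ t ^ 2 = (t ^ 2 + b * t + c) / a)
    (hmom : ∀ k : ℕ, IntegrableOn (fun t => |t| ^ k * (φ t) ^ (d - 1) * w t) S)
    (p : MvPolynomial (Fin (d + 1)) ℝ) :
    IntegrableOn (fun t => (φ t) ^ (d - 1) * sphInt d (φ t) t p * w t) S := by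
  induction p using MvPolynomial.induction_on' with
  | monomial u k =>
    obtain ⟨C, hC⟩ := sphInt_monomial d u k
    refine ((integrableOn_pow hS hφpos hφ hmom (∑ i : Fin d, u i.castSucc)
      (u (Fin.last d))).const_mul C).congr
      (Filter.Eventually.of_forall fun t => ?_)
    dsimp only
    rw [hC]
    ring
  | add p q hp hq =>
    simp only [sphInt_add, mul_add, add_mul]
    exact hp.add hq

/-- On restrictions of polynomials the extension by zero in `surfInner` is never active, since the
points `(φ(t)ξ, t)` lie on the surface. -/
lemma surfInner_restrictLin {d : ℕ} {S : Set ℝ} (hS : IsOpen S) {φ w : ℝ → ℝ} {cw : ℝ}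
    (hφpos : ∀ t ∈ S, 0 < φ t) (p q : MvPolynomial (Fin (d + 1)) ℝ) :
    surfInner d S φ w cw (restrictLin d (quadSurface d S φ) p)
        (restrictLin d (quadSurface d S φ) q) =
      cw * ∫ t in S, (φ t) ^ (d - 1) * sphInt d (φ t) t (p * q) * w t := by
  rw [surfInner]
  congr 1
  refine setIntegral_congr_fun hS.measurableSet fun t ht => ?_
  congr 2
  rw [sphInt]
  congr 1
  funext ξ
  have hmem : (φ t • (ξ : EuclideanSpace ℝ (Fin d)), t) ∈ quadSurface d S φ := by
    refine ⟨ht, ?_⟩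
    simp [norm_smul, abs_of_pos (hφpos t ht)]
  rw [ext0, ext0, dif_pos hmem, dif_pos hmem, evalAt_mul]
  rfl

/-- If `p` has zero norm, then `p(φ(t)ξ, t)` vanishes for all `ξ` and almost every `t`, and by
continuity for every `t`. -/
lemma restrictLin_eq_zero_of_integral {d : ℕ} {a b c : ℝ} {S : Set ℝ} (hS : IsOpen S)
    {φ w : ℝ → ℝ} (hφpos : ∀ t ∈ S, 0 < φ t)
    (hφ : ∀ t ∈ S, φ t ^ 2 = (t ^ 2 + b * t + c) / a)
    (hwpos : ∀ᵐ t ∂(volume.restrict S), 0 < w t)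
    (hmom : ∀ k : ℕ, IntegrableOn (fun t => |t| ^ k * (φ t) ^ (d - 1) * w t) S)
    (p : MvPolynomial (Fin (d + 1)) ℝ)
    (h : ∫ t in S, (φ t) ^ (d - 1) * sphInt d (φ t) t (p * p) * w t = 0) :
    restrictLin d (quadSurface d S φ) p = 0 := by
  have hSm := ae_restrict_of_forall_mem (μ := volume) hS.measurableSet (fun t ht => ht)
  have hnn : ∀ t, 0 ≤ sphInt d (φ t) t (p * p) := fun t =>
    integral_nonneg fun ξ => by
      rw [evalAt_mul]; exact mul_self_nonneg _
  rw [setIntegral_eq_zero_iff_of_nonneg_ae ?_ (integrableOn_sphInt hS hφpos hφ hmom _)] at h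
  · have hae : ∀ᵐ t ∂(volume.restrict S),
        ∀ ξ : Metric.sphere (0 : EuclideanSpace ℝ (Fin d)) 1,
          evalAt d (φ t • (ξ : EuclideanSpace ℝ (Fin d)), t) p = 0 := by
      filter_upwards [h, hwpos, hSm] with t h0 hw ht
      have hI : sphInt d (φ t) t (p * p) = 0 := by
        rcases mul_eq_zero.1 h0 with h1 | h1
        · exact (mul_eq_zero.1 h1).resolve_left (pow_pos (hφpos t ht) _).ne'
        · exact absurd h1 hw.ne'
      rw [sphInt, integral_eq_zero_iff_of_nonneg (fun ξ => by
        rw [evalAt_mul]; exact mul_self_nonneg _) (integrable_sph d _ _ _)] at hI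
      have hz := (Continuous.ae_eq_iff_eq (sphMeas d) (continuous_sph d _ _ _)
        continuous_zero).1 hI
      intro ξ
      have := congrFun hz ξ
      rw [evalAt_mul] at this
      exact mul_self_eq_zero.1 this
    funext ⟨⟨x, t⟩, ht, hx⟩
    change t ∈ S at ht
    change ‖x‖ = φ t at hx
    have hpos := hφpos t ht
    set ξ : Metric.sphere (0 : EuclideanSpace ℝ (Fin d)) 1 := ⟨(φ t)⁻¹ • x, by
      simp [norm_smul, hx, abs_of_pos hpos, hpos.ne']⟩ with hξ
    have hcont : ContinuousOn (fun s => evalAt d (φ s • (ξ : EuclideanSpace ℝ (Fin d)), s) p) S :=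
      (continuous_evalAt d p).comp_continuousOn
        (((continuousOn_phi hφpos hφ).smul continuousOn_const).prodMk continuousOn_id)
    have hEq := Measure.eqOn_open_of_ae_eq (μ := volume) (g := fun _ => 0)
      (hae.mono fun s hs => hs ξ) hS hcont continuousOn_const ht
    have hxξ : φ t • (ξ : EuclideanSpace ℝ (Fin d)) = x := by
      rw [hξ]; exact smul_inv_smul₀ hpos.ne' x
    dsimp only at hEq
    rw [hxξ] at hEq
    exact hEq
  · filter_upwards [hwpos, hSm] with t hw ht
    exact mul_nonneg (mul_nonneg (pow_pos (hφpos t ht) _).le (hnn t)) hw.le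

/-! ### Dimension of the orthogonal complement -/

/-- In a finite-dimensional inner product space `U`, `dim W^⊥ = dim U - dim W`. The form `β` is
only required to behave as an inner product on `U`. -/
lemma finrank_orthogonal_add {E : Type*} [AddCommGroup E] [Module ℝ E] (U W : Submodule ℝ E)
    [FiniteDimensional ℝ U] (hWU : W ≤ U) (β : E → E → ℝ)
    (hadd : ∀ f ∈ U, ∀ g ∈ U, ∀ h ∈ U, β (f + g) h = β f h + β g h)
    (hsmul : ∀ k : ℝ, ∀ f ∈ U, ∀ h ∈ U, β (k • f) h = k * β f h)
    (hsymm : ∀ f g, β f g = β g f)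
    (hdef : ∀ f ∈ U, β f f = 0 → f = 0) :
    Module.finrank ℝ (Submodule.span ℝ {f : E | f ∈ U ∧ ∀ g ∈ W, β f g = 0}) +
      Module.finrank ℝ W = Module.finrank ℝ U := by
  let B : LinearMap.BilinForm ℝ U := LinearMap.mk₂ ℝ (fun f g => β f g)
    (fun f g h => hadd _ f.2 _ g.2 _ h.2) (fun k f h => hsmul k _ f.2 _ h.2)
    (fun f g h => by
      rw [hsymm, hsymm f.1 g.1, hsymm f.1 h.1]; exact hadd _ g.2 _ h.2 _ f.2)
    (fun k f h => by
      rw [hsymm, hsymm f.1 h.1]; exact hsmul k _ h.2 _ f.2)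
  have hB : ∀ f g : U, B f g = β f g := fun _ _ => rfl
  have hker : LinearMap.ker B = ⊥ := by
    rw [LinearMap.ker_eq_bot']
    intro f hf
    exact Subtype.ext (hdef _ f.2 (by rw [← hB, hf]; rfl))
  have hset : {f : E | f ∈ U ∧ ∀ g ∈ W, β f g = 0} =
      ((B.orthogonal (W.comap U.subtype)).map U.subtype : Set E) := by
    ext f
    constructor
    · rintro ⟨hf, h⟩
      refine ⟨⟨f, hf⟩, fun g hg => ?_, rfl⟩
      change β g f = 0
      rw [hsymm]
      exact h _ hg
    · rintro ⟨f, hf, rfl⟩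
      refine ⟨f.2, fun g hg => ?_⟩
      rw [hsymm]
      exact hf ⟨g, hWU hg⟩ hg
  have key := LinearMap.BilinForm.finrank_add_finrank_orthogonal' (B := B) (W.comap U.subtype)
  rw [hker, inf_bot_eq, finrank_bot, add_zero,
    (Submodule.comapSubtypeEquivOfLe hWU).finrank_eq] at key
  rw [hset, Submodule.span_eq, Submodule.finrank_map_subtype_eq, add_comm]
  exact key

/-- With `S` a nonempty open interval, `φ > 0` on `S` satisfying
`φ(t)² = (t² + bt + c)/a`, and `w ≥ 0` a.e. positive with finite moments and positive
total mass, the space `V_n(∂V^{d+1})` of degree-`n` orthogonal polynomials on the surface,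
i.e. the elements of `Π_n(∂V^{d+1})` orthogonal to `Π_{n−1}(∂V^{d+1})` for `⟨·,·⟩_w`,
has dimension `C(n+d−1, d−1) + C(n+d−2, d−1) = dim P_n^d + dim P_{n−1}^d`. -/
theorem finrank_orthogonal_polynomials_quadSurface
    (d : ℕ) (hd : 2 ≤ d) (n : ℕ) (a b c : ℝ) (ha : a ≠ 0)
    (Sset : Set ℝ) (hSopen : IsOpen Sset) (hSne : Sset.Nonempty)
    (hSconn : Sset.OrdConnected)
    (φ : ℝ → ℝ) (hφpos : ∀ t ∈ Sset, 0 < φ t)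
    (hφ : ∀ t ∈ Sset, φ t ^ 2 = (t ^ 2 + b * t + c) / a)
    (w : ℝ → ℝ) (hw0 : ∀ t ∈ Sset, 0 ≤ w t)
    (hwpos : ∀ᵐ t ∂(volume.restrict Sset), 0 < w t)
    (hmom : ∀ k : ℕ, IntegrableOn (fun t => |t| ^ k * (φ t) ^ (d - 1) * w t) Sset)
    (hmass : 0 < ∫ t in Sset, (φ t) ^ (d - 1) * w t)
    (cw : ℝ)
    (hcw : cw * ∫ t in Sset, (φ t) ^ (d - 1) *
        ((sphMeas d) Set.univ).toReal * w t = 1) :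
    Module.finrank ℝ
      ↥(Submodule.span ℝ
        {f : quadSurface d Sset φ → ℝ |
          f ∈ Submodule.map (restrictLin d (quadSurface d Sset φ))
              (MvPolynomial.restrictTotalDegree (Fin (d + 1)) ℝ n) ∧
          ∀ q : MvPolynomial (Fin (d + 1)) ℝ, q.totalDegree < n →
            surfInner d Sset φ w cw f (restrictLin d (quadSurface d Sset φ) q) = 0}) =
      Nat.choose (n + d - 1) (d - 1) + Nat.choose (n + d - 2) (d - 1) := by
  obtain ⟨m, rfl⟩ : ∃ m, d = m + 1 := ⟨d - 1, by omega⟩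
  have hcw0 : cw ≠ 0 := by
    rintro rfl
    simp at hcw
  have hset : {f : quadSurface (m + 1) Sset φ → ℝ |
      f ∈ Submodule.map (restrictLin (m + 1) (quadSurface (m + 1) Sset φ))
          (MvPolynomial.restrictTotalDegree (Fin (m + 1 + 1)) ℝ n) ∧
      ∀ q : MvPolynomial (Fin (m + 1 + 1)) ℝ, q.totalDegree < n →
        surfInner (m + 1) Sset φ w cw f
          (restrictLin (m + 1) (quadSurface (m + 1) Sset φ) q) = 0} =
      {f | f ∈ surfLT m Sset φ (n + 1) ∧
        ∀ g ∈ surfLT m Sset φ n, surfInner (m + 1) Sset φ w cw f g = 0} := by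
    ext f
    simp only [Set.mem_ofPred_eq]
    rw [restrictTotalDegree_eq_polyLT]
    refine and_congr_right fun _ => ⟨?_, fun h q hq => h _ ⟨q, mem_polyLT_iff.2 (Or.inr hq), rfl⟩⟩
    rintro h _ ⟨q, hq, rfl⟩
    rcases mem_polyLT_iff.1 hq with rfl | hq
    · -- for `n = 0` the zero polynomial does not satisfy `totalDegree < n`
      simp [surfInner, ext0]
    · exact h q hq
  have hle : surfLT m Sset φ n ≤ surfLT m Sset φ (n + 1) :=
    Submodule.map_mono (restrictSupport_mono _ fun s hs => Nat.lt_succ_of_lt hs)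
  have key := finrank_orthogonal_add (surfLT m Sset φ (n + 1)) (surfLT m Sset φ n) hle
    (surfInner (m + 1) Sset φ w cw) ?_ ?_ ?_ ?_
  · rw [hset]
    rw [finrank_surfLT m hSopen hSne hφpos hφ, finrank_surfLT m hSopen hSne hφpos hφ] at key
    have e1 : (n + 1 + m).choose (m + 1) = (n + m).choose m + (n + m).choose (m + 1) := by
      rw [show n + 1 + m = n + m + 1 by omega, Nat.choose_succ_succ]
    have e2 : (n + m).choose (m + 1) = (n + m - 1).choose m + (n - 1 + m).choose (m + 1) := by
      rcases n with _ | n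
      · -- this is where `1 ≤ m` is needed: `C(m - 1, m)` has to vanish
        simp [Nat.choose_eq_zero_of_lt (show m - 1 < m by omega)]
      · rw [show n + 1 + m = n + m + 1 by omega, Nat.choose_succ_succ, Nat.add_sub_cancel,
          Nat.add_sub_cancel]
    rw [show n + (m + 1) - 1 = n + m by omega, show n + (m + 1) - 2 = n + m - 1 by omega,
      Nat.add_sub_cancel]
    rw [Nat.add_sub_cancel] at key
    omega
  · rintro _ ⟨p, _, rfl⟩ _ ⟨q, _, rfl⟩ _ ⟨r, _, rfl⟩
    rw [← map_add, surfInner_restrictLin hSopen hφpos, surfInner_restrictLin hSopen hφpos,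
      surfInner_restrictLin hSopen hφpos, ← mul_add, ← integral_add
        (integrableOn_sphInt hSopen hφpos hφ hmom _) (integrableOn_sphInt hSopen hφpos hφ hmom _)]
    simp only [add_mul p q r, sphInt_add, mul_add, add_mul]
  · rintro k _ ⟨p, _, rfl⟩ _ ⟨r, _, rfl⟩
    rw [← map_smul, surfInner_restrictLin hSopen hφpos, surfInner_restrictLin hSopen hφpos,
      mul_left_comm k, ← integral_const_mul k]
    simp only [smul_mul_assoc, sphInt_smul]
    congr 2
    funext t
    ring
  · intro f g
    simp only [surfInner, mul_comm]
  · rintro _ ⟨p, _, rfl⟩ h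
    rw [surfInner_restrictLin hSopen hφpos] at h
    exact restrictLin_eq_zero_of_integral hSopen hφpos hφ hwpos hmom p
      ((mul_eq_zero.1 h).resolve_left hcw0)
end
end

section
/- Let d ≥ 2, μ > −1/2, let S ⊆ ℝ be a nonempty open interval, and let φ : S → (0,∞) be such that φ(t)² is a polynomial in t of degree at most 2. Let w ≥ 0 be a weight on S, positive almost everywhere, with all moments ∫_S |t|^k φ(t)^{d+2μ−1} w(t) dt finite, and set W_μ(x,t) := w(t)(φ(t)² − ‖x‖²)^{μ−1/2} on V^{d+1} = {(x,t) ∈ ℝ^d × ℝ : ‖x‖ ≤ φ(t), t ∈ S}. Suppose: (1) x_1,…,x_N ∈ B^d and μ_1,…,μ_N > 0 satisfy ∫_{B^d} g(x)(1−‖x‖²)^{μ−1/2} dx = Σ_{k=1}^N μ_k g(x_k) for every polynomial g of degree at most 2n−1 on ℝ^d; (2) t_1,…,t_n ∈ S are the zeros of the orthogonal polynomial of degree n with respect to the weight φ(t)^{d+2μ−1} w(t) on S, and ν_1,…,ν_n are the Gauss quadrature weights, so that ∫_S g(t) φ(t)^{d+2μ−1} w(t) dt = Σ_{j=1}^n ν_j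 g(t_j) for every polynomial g of one variable of degree at most 2n−1. Then for every polynomial f of total degree at most 2n−1 in d+1 variables, ∫_{V^{d+1}} f(x,t) W_μ(x,t) dx dt = Σ_{j=1}^n Σ_{k=1}^N ν_j μ_k f(φ(t_j) x_k, t_j). -/
/-!
The substitution `x = φ(t) u` maps the slice of the body at height `t` onto the unit ball. It
factors the integral of a monomial `x^a t^k` (with `m = |a|`) as
`(∫_S t^k φ(t)^m φ(t)^{d+2μ-1} w(t) dt) * (∫_B u^a (1 - ‖u‖²)^{μ-1/2} du)`
(`integral_prod_scaled`, applied to the function `ballMono`). The second factor is given by the ball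
rule. If `m` is even, `t^k φ(t)^m` is a polynomial of degree at most `k + m ≤ 2n - 1`, because `φ²`
is a quadratic polynomial, and the Gauss rule is exact for the first factor. If `m` is odd, the
second factor vanishes by the symmetry `u ↦ -u` (`integral_ballMono_odd`), and so does the
corresponding sum over the ball nodes.

Fubini's theorem requires absolute integrability. The ball weight is integrable because
`μ - 1/2 > -1` (`integrable_ballWeight`, in polar coordinates), and `|t|^k φ^m` is dominated by a
polynomial, so that the first factor converges by the moment hypothesis
(`integrable_moment_phi`). The measurability of `w` and `φ` on `S` also comes from the moments and
from `φ = √(φ²)`.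
-/

open MeasureTheory MvPolynomial Real

noncomputable section

/-- The quadratic domain of revolution `V^{d+1} = {(x,t) : ‖x‖ ≤ φ(t), t ∈ S}`. -/
def quadBody (d : ℕ) (Sset : Set ℝ) (φ : ℝ → ℝ) :
    Set (EuclideanSpace ℝ (Fin d) × ℝ) :=
  {z | z.2 ∈ Sset ∧ ‖z.1‖ ≤ φ z.2}

/-! ### Monomials against the weight on the unit ball -/

/-- The function `u^a (1 - ‖u‖²)^s` on the unit ball, extended by zero. -/
def ballMono {d : ℕ} (s : ℝ) (a : Fin d → ℕ) (u : EuclideanSpace ℝ (Fin d)) : ℝ :=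
  (Metric.closedBall (0 : EuclideanSpace ℝ (Fin d)) 1).indicator
    (fun u => (∏ i, u i ^ a i) * (1 - ‖u‖ ^ 2) ^ s) u

lemma ballMono_apply {d : ℕ} (s : ℝ) (a : Fin d → ℕ) (u : EuclideanSpace ℝ (Fin d)) :
    ballMono s a u = if ‖u‖ ≤ 1 then (∏ i, u i ^ a i) * (1 - ‖u‖ ^ 2) ^ s else 0 := by
  classical
  simp only [ballMono, Set.indicator_apply, mem_closedBall_zero_iff]

lemma measurable_ballMono {d : ℕ} (s : ℝ) (a : Fin d → ℕ) :
    Measurable (ballMono s a : EuclideanSpace ℝ (Fin d) → ℝ) := by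
  unfold ballMono
  refine Measurable.indicator ?_ Metric.isClosed_closedBall.measurableSet
  fun_prop

/-- Polar coordinates reduce the claim to the interval `[0, 1]`, where
`(1 - r²)^s = (1 + r)^s (1 - r)^s` and only the factor `(1 - r)^s` is singular. -/
lemma integrable_ballWeight {d : ℕ} (hd : 2 ≤ d) {s : ℝ} (hs : -1 < s) :
    Integrable (fun u : EuclideanSpace ℝ (Fin d) => if ‖u‖ ≤ 1 then (1 - ‖u‖ ^ 2) ^ s else 0) := by
  have : NeZero d := ⟨by omega⟩
  have h := integrable_fun_norm_addHaar (E := EuclideanSpace ℝ (Fin d)) (F := ℝ) volume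
    (f := fun r => if r ≤ 1 then (1 - r ^ 2) ^ s else 0)
  refine h.2 ?_
  set D := Module.finrank ℝ (EuclideanSpace ℝ (Fin d)) - 1
  have h1 : IntegrableOn (fun r : ℝ => (1 - r) ^ s) (Set.Icc 0 1) := by
    have := (intervalIntegral.intervalIntegrable_rpow' (a := 0) (b := 1) hs).comp_sub_left 1
    simp only [sub_zero, sub_self] at this
    have := this.symm
    rwa [intervalIntegrable_iff_integrableOn_Icc_of_le zero_le_one] at this
  have h2 : IntegrableOn (fun r : ℝ => (r ^ D * (1 + r) ^ s) * (1 - r) ^ s) (Set.Icc 0 1) := by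
    refine IntegrableOn.continuousOn_mul ?_ h1 isCompact_Icc
    refine ContinuousOn.mul (by fun_prop) ?_
    refine ContinuousOn.rpow_const (by fun_prop) ?_
    intro x hx
    left
    have := hx.1
    positivity
  rw [← integrable_indicator_iff measurableSet_Icc] at h2
  refine h2.integrableOn.congr_fun ?_ measurableSet_Ioi
  intro r hr
  have hr : 0 < r := hr
  by_cases h' : r ≤ 1
  · have hm : r ∈ Set.Icc (0 : ℝ) 1 := ⟨hr.le, h'⟩
    simp only [Set.indicator_of_mem hm, h', if_true, smul_eq_mul]
    rw [mul_assoc, ← Real.mul_rpow (by linarith) (by linarith)]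
    ring_nf
  · have hm : r ∉ Set.Icc (0 : ℝ) 1 := fun h => h' h.2
    simp only [Set.indicator_of_notMem hm, h', if_false, smul_zero]

lemma integrable_ballMono {d : ℕ} (hd : 2 ≤ d) {s : ℝ} (hs : -1 < s) (a : Fin d → ℕ) :
    Integrable (ballMono s a : EuclideanSpace ℝ (Fin d) → ℝ) := by
  refine (integrable_ballWeight hd hs).mono (measurable_ballMono s a).aestronglyMeasurable ?_
  refine Filter.Eventually.of_forall fun u => ?_
  rw [ballMono_apply]
  split_ifs with h
  · rw [norm_mul]
    refine mul_le_of_le_one_left (norm_nonneg _) ?_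
    rw [norm_prod]
    refine Finset.prod_le_one (fun _ _ => norm_nonneg _) fun i _ => ?_
    rw [norm_pow]
    exact pow_le_one₀ (norm_nonneg _) ((PiLp.norm_apply_le u i).trans h)
  · simp

lemma integral_ballMono_odd {d : ℕ} (s : ℝ) (a : Fin d → ℕ) (ha : Odd (∑ i, a i)) :
    ∫ u : EuclideanSpace ℝ (Fin d), ballMono s a u = 0 := by
  have h := integral_neg_eq_self (ballMono s a : EuclideanSpace ℝ (Fin d) → ℝ) volume
  have h2 : ∀ u : EuclideanSpace ℝ (Fin d), ballMono s a (-u) = - ballMono s a u := by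
    intro u
    have : ∏ i, (-u) i ^ a i = - ∏ i, u i ^ a i := by
      have : ∀ i, (-u) i ^ a i = (-1) ^ a i * u i ^ a i := by
        intro i
        rw [← mul_pow]
        simp
      simp only [this, Finset.prod_mul_distrib, Finset.prod_pow_eq_pow_sum, ha.neg_one_pow]
      ring
    rw [ballMono_apply, ballMono_apply, this, norm_neg]
    split_ifs <;> ring
  simp only [h2, integral_neg] at h
  linarith

/-! ### Scaling the slices to the unit ball -/

/-- Fubini's theorem combined with the substitution `x = φ(t) u` in each slice. -/
lemma integral_prod_scaled {d : ℕ} (ρ : Measure ℝ) [SFinite ρ] (φ c : ℝ → ℝ)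
    (hφ : AEMeasurable φ ρ) (hpos : ∀ᵐ t ∂ρ, 0 < φ t)
    (K : EuclideanSpace ℝ (Fin d) → ℝ) (hK : Measurable K) (hKi : Integrable K)
    (hc : Integrable (fun t => c t * φ t ^ d) ρ) :
    Integrable (fun z : EuclideanSpace ℝ (Fin d) × ℝ => c z.2 * K ((φ z.2)⁻¹ • z.1))
      (volume.prod ρ) ∧
    ∫ z, c z.2 * K ((φ z.2)⁻¹ • z.1) ∂((volume : Measure (EuclideanSpace ℝ (Fin d))).prod ρ) =
      (∫ t, c t * φ t ^ d ∂ρ) * ∫ u, K u := by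
  -- `c` itself need not be integrable, but it inherits measurability from `c φ^d`
  have hcm : AEStronglyMeasurable c ρ := by
    have h1 : AEStronglyMeasurable (fun t => c t * φ t ^ d * (φ t ^ d)⁻¹) ρ :=
      hc.1.mul (hφ.pow_const d).inv.aestronglyMeasurable
    refine h1.congr ?_
    filter_upwards [hpos] with t ht
    field_simp
  have hm : AEStronglyMeasurable
      (fun z : EuclideanSpace ℝ (Fin d) × ℝ => c z.2 * K ((φ z.2)⁻¹ • z.1))
      (volume.prod ρ) := by
    refine hcm.comp_snd.mul (AEMeasurable.aestronglyMeasurable ?_)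
    refine hK.comp_aemeasurable ?_
    exact (hφ.comp_snd).inv.smul measurable_fst.aemeasurable
  have hslice : ∀ G : EuclideanSpace ℝ (Fin d) → ℝ, ∀ t, 0 < φ t →
      ∫ x, G ((φ t)⁻¹ • x) = φ t ^ d * ∫ u, G u := by
    intro G t ht
    rw [Measure.integral_comp_inv_smul, finrank_euclideanSpace_fin, abs_of_pos (by positivity),
      smul_eq_mul]
  have hint : Integrable (fun z : EuclideanSpace ℝ (Fin d) × ℝ => c z.2 * K ((φ z.2)⁻¹ • z.1))
      (volume.prod ρ) := by
    rw [integrable_prod_iff' hm]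
    constructor
    · filter_upwards [hpos] with t ht
      exact (hKi.comp_smul (inv_ne_zero ht.ne')).const_mul _
    · refine (hc.norm.mul_const (∫ u, ‖K u‖)).congr ?_
      filter_upwards [hpos] with t ht
      simp only [norm_mul]
      rw [integral_const_mul, hslice (fun u => ‖K u‖) t ht, norm_pow, Real.norm_of_nonneg ht.le]
      ring
  refine ⟨hint, ?_⟩
  rw [integral_prod_symm _ hint, ← integral_mul_const]
  refine integral_congr_ae ?_
  filter_upwards [hpos] with t ht
  rw [integral_const_mul, hslice K t ht]
  ring

/-! ### Integrability from the moments -/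

lemma integrable_poly (ρ : Measure ℝ) (v : ℝ → ℝ)
    (h : ∀ k : ℕ, Integrable (fun t => |t| ^ k * v t) ρ) (q : Polynomial ℝ) :
    Integrable (fun t => q.eval t * v t) ρ := by
  have hv : AEStronglyMeasurable v ρ := by simpa using (h 0).1
  have e : (fun t => q.eval t * v t) =
      fun t => ∑ i ∈ Finset.range (q.natDegree + 1), q.coeff i * (t ^ i * v t) := by
    funext t
    rw [Polynomial.eval_eq_sum_range, Finset.sum_mul]
    simp only [mul_assoc]
  rw [e]
  refine integrable_finsetSum _ fun i _ => Integrable.const_mul ?_ _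
  refine (h i).mono ((by fun_prop : Continuous fun t : ℝ => t ^ i).aestronglyMeasurable.mul hv) ?_
  exact Filter.Eventually.of_forall fun t => by simp

/-- The integrand is dominated through `φ^m ≤ 1 + φ^{2m}` and `|t|^k ≤ 1 + t^{2k}`, whose right-hand
sides are polynomials. -/
lemma integrable_moment_phi (ρ : Measure ℝ) (v φ : ℝ → ℝ) (hφ : AEMeasurable φ ρ)
    (P : Polynomial ℝ) (hP : ∀ᵐ t ∂ρ, φ t ^ 2 = P.eval t)
    (h : ∀ k : ℕ, Integrable (fun t => |t| ^ k * v t) ρ) (k m : ℕ) :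
    Integrable (fun t => t ^ k * φ t ^ m * v t) ρ := by
  have hv : AEStronglyMeasurable v ρ := by simpa using (h 0).1
  refine (integrable_poly ρ v h ((1 + P ^ m) * (1 + Polynomial.X ^ (2 * k)))).mono
    (((by fun_prop : Continuous fun t : ℝ => t ^ k).aestronglyMeasurable.mul
      (hφ.pow_const m).aestronglyMeasurable).mul hv) ?_
  filter_upwards [hP] with t ht
  have key : ∀ y : ℝ, |y| ≤ 1 + y ^ 2 := fun y => by
    rw [← sq_abs]; nlinarith [sq_nonneg (|y| - 1), abs_nonneg y]
  have e : ((1 + P ^ m) * (1 + Polynomial.X ^ (2 * k))).eval t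
      = (1 + (φ t ^ m) ^ 2) * (1 + (t ^ k) ^ 2) := by
    simp [← ht]; ring
  rw [e, norm_mul, norm_mul, norm_mul (_ * _)]
  refine mul_le_mul_of_nonneg_right ?_ (norm_nonneg _)
  simp only [Real.norm_eq_abs]
  rw [abs_of_nonneg (by positivity : (0 : ℝ) ≤ (1 + (φ t ^ m) ^ 2) * (1 + (t ^ k) ^ 2)),
    mul_comm]
  exact mul_le_mul (key _) (key _) (abs_nonneg _) (by positivity)

/-! ### The product rule -/

/-- On the slice at height `t`, the monomial integrand is the rescaled function `ballMono`. -/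
lemma slice_eq {d : ℕ} (a : Fin d → ℕ) (k : ℕ) (s p wt t : ℝ) (hp : 0 < p)
    (x : EuclideanSpace ℝ (Fin d)) :
    (if ‖x‖ ≤ p then (∏ i, x i ^ a i) * t ^ k * (wt * (p ^ 2 - ‖x‖ ^ 2) ^ s) else 0) =
      (t ^ k * p ^ (∑ i, a i) * (p ^ (2 * s) * wt)) * ballMono s a (p⁻¹ • x) := by
  have hn : ‖p⁻¹ • x‖ = ‖x‖ / p := by
    rw [norm_smul, norm_inv, Real.norm_of_nonneg hp.le]; ring
  rw [ballMono_apply, hn]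
  simp only [div_le_one hp]
  split_ifs with h
  · have h1 : ∏ i, (p⁻¹ • x) i ^ a i = (p ^ (∑ i, a i))⁻¹ * ∏ i, x i ^ a i := by
      simp only [PiLp.smul_apply, smul_eq_mul, mul_pow, Finset.prod_mul_distrib,
        Finset.prod_pow_eq_pow_sum]
      rw [inv_pow]
    have h2 : (p ^ 2 - ‖x‖ ^ 2) ^ s = p ^ (2 * s) * (1 - (‖x‖ / p) ^ 2) ^ s := by
      have h3 : (p : ℝ) ^ (2 * s) = (p ^ 2) ^ s := by
        rw [Real.rpow_mul hp.le, Real.rpow_two]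
      rw [h3, ← Real.mul_rpow (by positivity)]
      · congr 1; field_simp
      · rw [sub_nonneg]
        exact pow_le_one₀ (by positivity) ((div_le_one hp).2 h)
    rw [h1, h2]
    field_simp
  · simp

/-- Product cubature rule of degree `2n−1` for the weight
`W_μ(x,t) = w(t)(φ(t)² − ‖x‖²)^{μ−1/2}` on the quadratic body of revolution, obtained
from a cubature rule of degree `2n−1` for `(1−‖x‖²)^{μ−1/2}` on the unit ball and the
Gauss quadrature of the weight `φ(t)^{d+2μ−1} w(t)` on `S`. -/
theorem body_cubature
    (d n : ℕ) (hd : 2 ≤ d) (hn : 0 < n) (μ : ℝ) (hμ : -(1 / 2 : ℝ) < μ)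
    (Sset : Set ℝ) (hSopen : IsOpen Sset) (hSne : Sset.Nonempty)
    (hSconn : Sset.OrdConnected)
    (φ : ℝ → ℝ) (hφpos : ∀ t ∈ Sset, 0 < φ t)
    (c2 c1 c0 : ℝ) (hφsq : ∀ t ∈ Sset, φ t ^ 2 = c2 * t ^ 2 + c1 * t + c0)
    (w : ℝ → ℝ) (hw0 : ∀ t ∈ Sset, 0 ≤ w t)
    (hwpos : ∀ᵐ t ∂(volume.restrict Sset), 0 < w t)
    (hmom : ∀ k : ℕ,
      IntegrableOn (fun t => |t| ^ k * φ t ^ ((d : ℝ) + 2 * μ - 1) * w t) Sset)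
    -- a cubature rule of degree `2n−1` for `(1−‖x‖²)^{μ−1/2}` on the unit ball
    (N : ℕ) (xk : Fin N → EuclideanSpace ℝ (Fin d))
    (hxk : ∀ k, xk k ∈ Metric.closedBall (0 : EuclideanSpace ℝ (Fin d)) 1)
    (μw : Fin N → ℝ) (hμpos : ∀ k, 0 < μw k)
    (hball : ∀ g : MvPolynomial (Fin d) ℝ, g.totalDegree ≤ 2 * n - 1 →
      ∫ u in Metric.closedBall (0 : EuclideanSpace ℝ (Fin d)) 1,
          MvPolynomial.eval u g * (1 - ‖u‖ ^ 2) ^ (μ - 1 / 2) =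
        ∑ k, μw k * MvPolynomial.eval (xk k) g)
    -- the Gauss quadrature of degree `2n−1` for `φ(t)^{d+2μ−1} w(t)` on `S`:
    -- nodes are the zeros of the orthogonal polynomial `p` of degree `n`
    (p : Polynomial ℝ) (hpdeg : p.degree = n)
    (hporth : ∀ k < n,
      ∫ t in Sset, p.eval t * t ^ k * φ t ^ ((d : ℝ) + 2 * μ - 1) * w t = 0)
    (tj : Fin n → ℝ) (htS : ∀ j, tj j ∈ Sset) (htz : ∀ j, p.eval (tj j) = 0)
    (htinj : Function.Injective tj)
    (ν : Fin n → ℝ)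
    (hgauss : ∀ g : Polynomial ℝ, g.degree ≤ (2 * n - 1 : ℕ) →
      ∫ t in Sset, g.eval t * φ t ^ ((d : ℝ) + 2 * μ - 1) * w t =
        ∑ j, ν j * g.eval (tj j)) :
    -- the product rule is a cubature rule of degree `2n−1` on the body
    ∀ f : MvPolynomial (Fin (d + 1)) ℝ, f.totalDegree ≤ 2 * n - 1 →
      ∫ z in quadBody d Sset φ,
          MvPolynomial.eval (Fin.snoc (z.1 : Fin d → ℝ) z.2) f *
            (w z.2 * ((φ z.2) ^ 2 - ‖z.1‖ ^ 2) ^ (μ - 1 / 2)) ∂volume =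
        ∑ j, ∑ k, ν j * μw k *
          MvPolynomial.eval (Fin.snoc (φ (tj j) • xk k : Fin d → ℝ) (tj j)) f := by
  intro f hf
  have hSm : MeasurableSet Sset := hSopen.measurableSet
  have hs : (-1 : ℝ) < μ - 1 / 2 := by linarith
  set s : ℝ := μ - 1 / 2 with hs_def
  set ρ : Measure ℝ := volume.restrict Sset with hρ
  set v : ℝ → ℝ := fun t => φ t ^ ((d : ℝ) + 2 * μ - 1) * w t with hv_def
  have hpos : ∀ᵐ t ∂ρ, 0 < φ t := ae_restrict_of_forall_mem hSm hφpos
  set P : Polynomial ℝ := Polynomial.C c2 * Polynomial.X ^ 2 + Polynomial.C c1 * Polynomial.X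
    + Polynomial.C c0 with hP_def
  have hPS : ∀ t ∈ Sset, φ t ^ 2 = P.eval t := fun t ht => by simp [hP_def, hφsq t ht]
  have hP : ∀ᵐ t ∂ρ, φ t ^ 2 = P.eval t := ae_restrict_of_forall_mem hSm hPS
  have hPdeg : P.natDegree ≤ 2 := Polynomial.natDegree_quadratic_le
  have hφm : AEMeasurable φ ρ := by
    refine ⟨fun t => √(P.eval t), by fun_prop, ?_⟩
    filter_upwards [hP, hpos] with t h1 h2
    rw [← h1, Real.sqrt_sq h2.le]
  have hmom' : ∀ k : ℕ, Integrable (fun t => |t| ^ k * v t) ρ := fun k => by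
    simpa only [hv_def, mul_assoc, IntegrableOn] using hmom k
  -- `φ` is arbitrary off `S`, so the body is rewritten with the measurable function `√P`
  have hVm : MeasurableSet (quadBody d Sset φ) := by
    have : quadBody d Sset φ = {z : EuclideanSpace ℝ (Fin d) × ℝ |
        z.2 ∈ Sset ∧ ‖z.1‖ ≤ √(P.eval z.2)} := by
      ext z
      refine and_congr_right fun hz => ?_
      rw [← hPS _ hz, Real.sqrt_sq (hφpos _ hz).le]
    rw [this]
    refine (measurable_snd hSm).inter (measurableSet_le measurable_fst.norm ?_)
    exact (by fun_prop : Measurable fun t => √(P.eval t)).comp measurable_snd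
  -- the claim for a single monomial, together with the integrability needed for linearity
  have mono : ∀ (a : Fin d → ℕ) (k : ℕ), (∑ i, a i) + k ≤ 2 * n - 1 →
      IntegrableOn (fun z : EuclideanSpace ℝ (Fin d) × ℝ =>
        (∏ i, z.1 i ^ a i) * z.2 ^ k * (w z.2 * ((φ z.2) ^ 2 - ‖z.1‖ ^ 2) ^ s))
        (quadBody d Sset φ) ∧
      ∫ z in quadBody d Sset φ,
        (∏ i, z.1 i ^ a i) * z.2 ^ k * (w z.2 * ((φ z.2) ^ 2 - ‖z.1‖ ^ 2) ^ s) =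
      ∑ j, ∑ l, ν j * μw l * ((∏ i, (φ (tj j) * xk l i) ^ a i) * tj j ^ k) := by
    intro a k hak
    set m := ∑ i, a i with hm_def
    set c : ℝ → ℝ := fun t => t ^ k * φ t ^ m * (φ t ^ (2 * s) * w t) with hc_def
    have hcv : ∀ᵐ t ∂ρ, t ^ k * φ t ^ m * v t = c t * φ t ^ d := by
      filter_upwards [hpos] with t ht
      have e : φ t ^ ((d : ℝ) + 2 * μ - 1) = φ t ^ (2 * s) * φ t ^ d := by
        rw [← Real.rpow_natCast, ← Real.rpow_add ht]
        congr 1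
        rw [hs_def]; ring
      simp only [hv_def, hc_def, e]
      ring
    have hci : Integrable (fun t => c t * φ t ^ d) ρ :=
      (integrable_moment_phi ρ v φ hφm P hP hmom' k m).congr hcv
    obtain ⟨hI, hE⟩ := integral_prod_scaled ρ φ c hφm hpos (ballMono s a)
      (measurable_ballMono s a) (integrable_ballMono hd hs a) hci
    have hprod : (volume : Measure (EuclideanSpace ℝ (Fin d))).prod ρ =
        volume.restrict (Set.univ ×ˢ Sset) := by
      rw [hρ, Measure.volume_eq_prod, ← Measure.prod_restrict, Measure.restrict_univ]
    have hUm : MeasurableSet ((Set.univ : Set (EuclideanSpace ℝ (Fin d))) ×ˢ Sset) :=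
      MeasurableSet.univ.prod hSm
    -- extended by zero, the integrand on the body is the rescaled product of
    -- `integral_prod_scaled`
    have hind : (Set.univ ×ˢ Sset).indicator
          (fun z : EuclideanSpace ℝ (Fin d) × ℝ => c z.2 * ballMono s a ((φ z.2)⁻¹ • z.1)) =
        (quadBody d Sset φ).indicator (fun z : EuclideanSpace ℝ (Fin d) × ℝ =>
          (∏ i, z.1 i ^ a i) * z.2 ^ k * (w z.2 * ((φ z.2) ^ 2 - ‖z.1‖ ^ 2) ^ s)) := by
      funext z
      by_cases hz : z.2 ∈ Sset
      · rw [Set.indicator_of_mem (by simp [hz])]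
        simp only [hc_def]
        rw [← slice_eq a k s (φ z.2) (w z.2) z.2 (hφpos _ hz) z.1]
        by_cases hx : ‖z.1‖ ≤ φ z.2
        · rw [if_pos hx, Set.indicator_of_mem (show z ∈ quadBody d Sset φ from ⟨hz, hx⟩)]
        · rw [if_neg hx, Set.indicator_of_notMem
            (show z ∉ quadBody d Sset φ from fun h => hx h.2)]
      · rw [Set.indicator_of_notMem (by simp [hz]), Set.indicator_of_notMem
          (show z ∉ quadBody d Sset φ from fun h => hz h.1)]
    rw [hprod] at hI hE
    rw [← integral_indicator hUm, hind, integral_indicator hVm] at hE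
    have hI' := (integrable_indicator_iff hUm).2 hI
    rw [hind] at hI'
    refine ⟨(integrable_indicator_iff hVm).1 hI', ?_⟩
    rw [hE]
    have hB : ∫ u, ballMono s a u = ∑ l, μw l * ∏ i, xk l i ^ a i := by
      have h := hball (monomial (Finsupp.equivFunOnFinite.symm a) 1) ?_
      · simp only [eval_monomial, one_mul, Finsupp.prod_fintype _ _ (fun _ => pow_zero _),
          Finsupp.equivFunOnFinite_symm_apply_apply] at h
        rw [← h, ← integral_indicator Metric.isClosed_closedBall.measurableSet]
        rfl
      · refine (totalDegree_monomial_le _ _).trans ?_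
        rw [Finsupp.sum_fintype _ _ (fun _ => rfl)]
        simpa using (show m ≤ 2 * n - 1 by omega)
    have hR : ∑ j, ∑ l, ν j * μw l * ((∏ i, (φ (tj j) * xk l i) ^ a i) * tj j ^ k) =
        (∑ j, ν j * (tj j ^ k * φ (tj j) ^ m)) * ∑ l, μw l * ∏ i, xk l i ^ a i := by
      rw [Finset.sum_mul_sum]
      refine Finset.sum_congr rfl fun j _ => Finset.sum_congr rfl fun l _ => ?_
      simp only [mul_pow, Finset.prod_mul_distrib, Finset.prod_pow_eq_pow_sum, ← hm_def]
      ring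
    rw [hR, ← hB]
    rcases Nat.even_or_odd m with he | ho
    · -- `φ^m = P^{m/2}` on `S`, so the Gauss rule applies to the polynomial `t^k P^{m/2}`
      congr 1
      obtain ⟨r, hr⟩ := he
      have hr2 : m = 2 * r := by omega
      have hg := hgauss (Polynomial.X ^ k * P ^ r) ?_
      · rw [← integral_congr_ae hcv]
        have e2 : ∀ t ∈ Sset, (Polynomial.X ^ k * P ^ r).eval t = t ^ k * φ t ^ m := by
          intro t ht
          rw [hr2, pow_mul, hPS t ht]; simp
        simp only [e2 _ (htS _)] at hg
        rw [← hg]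
        refine setIntegral_congr_fun hSm fun t ht => ?_
        simp only [e2 t ht, hv_def]
        ring
      · refine Polynomial.degree_le_of_natDegree_le ?_
        refine Polynomial.natDegree_mul_le.trans ?_
        have h1 := Polynomial.natDegree_pow_le_of_le r hPdeg
        have h2 : (Polynomial.X ^ k : Polynomial ℝ).natDegree = k := by simp
        omega
    · rw [integral_ballMono_odd s a ho]; simp
  have hdeg : ∀ b ∈ f.support, (∑ i : Fin d, b i.castSucc) + b (Fin.last d) ≤ 2 * n - 1 := by
    intro b hb
    have h := (le_totalDegree hb).trans hf
    rwa [Finsupp.sum_fintype _ _ (fun _ => rfl), Fin.sum_univ_castSucc] at h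
  simp only [eval_eq', Fin.prod_univ_castSucc, Fin.snoc_castSucc, Fin.snoc_last, Finset.sum_mul,
    Finset.mul_sum]
  rw [integral_finsetSum]
  · have h1 : ∀ b ∈ f.support, ∫ z in quadBody d Sset φ, coeff b f *
        ((∏ i : Fin d, z.1 i ^ b i.castSucc) * z.2 ^ b (Fin.last d)) *
          (w z.2 * ((φ z.2) ^ 2 - ‖z.1‖ ^ 2) ^ s) =
        coeff b f * ∑ j, ∑ l, ν j * μw l *
          ((∏ i : Fin d, (φ (tj j) * xk l i) ^ b i.castSucc) * tj j ^ b (Fin.last d)) := by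
      intro b hb
      rw [← (mono (fun i => b i.castSucc) _ (hdeg b hb)).2, ← integral_const_mul]
      simp only [mul_assoc]
    rw [Finset.sum_congr rfl h1]
    simp only [Finset.mul_sum]
    rw [Finset.sum_comm]
    refine Finset.sum_congr rfl fun j _ => ?_
    rw [Finset.sum_comm]
    refine Finset.sum_congr rfl fun l _ => Finset.sum_congr rfl fun b _ => ?_
    simp only [Pi.smul_apply, smul_eq_mul]
    ring
  · intro b hb
    have := (mono (fun i => b i.castSucc) _ (hdeg b hb)).1.const_mul (coeff b f)
    simpa only [mul_assoc, IntegrableOn] using this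
end
end
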